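/- arXiv:1207.3262 — 2 statements merged into one kernel-verified Lean document; each statement's English description precedes it below -/
import Mathlib

section
/- Every ground term is AC-equal to its canonical form: fix a linear order ⊴ on ground terms; then for every ground term t, can_AC(t) =_AC t. -/
/-!
A right comb over `u` is, up to AC, independent of the order of its leaves, and `u` applied to two
combs is AC-equal to the comb on the concatenated lists (`IsCombOf.perm`, `IsCombOf.append`).
Hence any enumeration of the `u`-aliens of `t`, made into a right comb, gives a term AC-equal to
`t` (`isCombOf_aliens`, by induction on `t`). Since `𝒜_u(u(a, b)) = 𝒜_u(a) + 𝒜_u(b)`, this applies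
to the sorted enumeration used by `canAC` at a node, whose result is therefore AC-equal to
`u(can_AC t₁, can_AC t₂)`; structural induction and congruence finish the proof.
-/

/-- Ground terms over uninterpreted symbols `F` (with arities `ar`) and AC symbols `U`:
`app f ts` applies `f : F` to a tuple of `ar f` terms, `node u t₁ t₂` is `u(t₁,t₂)`. -/
inductive T (F : Type) (ar : F → ℕ) (U : Type) : Type where
  | app : (f : F) → (Fin (ar f) → T F ar U) → T F ar U
  | node : U → T F ar U → T F ar U → T F ar U

variable (F : Type) (ar : F → ℕ) (U : Type)

/-- `EqACE E s t` : the smallest congruence on ground terms containing AC-equalities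
(commutativity and associativity of every AC symbol) and the pairs of `E`. -/
inductive EqACE (E : Set (T F ar U × T F ar U)) : T F ar U → T F ar U → Prop where
  | ax : ∀ {s t : T F ar U}, (s, t) ∈ E → EqACE E s t
  | refl : ∀ t : T F ar U, EqACE E t t
  | symm : ∀ {s t : T F ar U}, EqACE E s t → EqACE E t s
  | trans : ∀ {s t w : T F ar U}, EqACE E s t → EqACE E t w → EqACE E s w
  | congr_app : ∀ (f : F) (ts ts' : Fin (ar f) → T F ar U),
      (∀ i, EqACE E (ts i) (ts' i)) → EqACE E (.app f ts) (.app f ts')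
  | congr_node : ∀ (u : U) {s₁ t₁ s₂ t₂ : T F ar U}, EqACE E s₁ t₁ → EqACE E s₂ t₂ →
      EqACE E (.node u s₁ s₂) (.node u t₁ t₂)
  | comm : ∀ (u : U) (x y : T F ar U), EqACE E (.node u x y) (.node u y x)
  | assoc : ∀ (u : U) (x y z : T F ar U),
      EqACE E (.node u x (.node u y z)) (.node u (.node u x y) z)

/-- AC-equality `=_AC`: the smallest congruence containing the AC axioms. -/
abbrev ACeq : T F ar U → T F ar U → Prop := EqACE F ar U ∅

open Classical in
/-- The multiset `𝒜_u(t)` of `u`-aliens of a term `t`. -/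
noncomputable def aliens (u : U) : T F ar U → Multiset (T F ar U)
  | .node u' t₁ t₂ => if u' = u then aliens u t₁ + aliens u t₂ else {T.node u' t₁ t₂}
  | .app f ts => {T.app f ts}

/-- `comb1 u s₁ [s₂,…,sₙ]` is the right comb `u(s₁, u(s₂, …, u(s_{n-1}, sₙ)…))`. -/
def comb1 (u : U) : T F ar U → List (T F ar U) → T F ar U
  | t, [] => t
  | t, s :: ss => .node u t (comb1 u s ss)

/-- The AC canonizer `can_AC` (w.r.t. the fixed linear order `⊴` on terms): under each AC
symbol `u` it collects the `u`-aliens of the canonized arguments, sorts them w.r.t. `⊴`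
and rebuilds a right comb.  (The `[]` branch is unreachable: the multiset of aliens always
has at least two elements.) -/
noncomputable def canAC [LinearOrder (T F ar U)] : T F ar U → T F ar U
  | .app f ts => .app f (fun i => canAC (ts i))
  | .node u t₁ t₂ =>
      match (aliens F ar U u (canAC t₁) + aliens F ar U u (canAC t₂)).sort (· ≤ ·) with
      | [] => .node u (canAC t₁) (canAC t₂)
      | s :: ss => comb1 F ar U u s ss

/-- `IsCombOf u l t`: the list `l` is nonempty and the right comb `u(l₁, u(l₂, …))` built on it
is AC-equal to `t`. -/
def IsCombOf (u : U) (l : List (T F ar U)) (t : T F ar U) : Prop :=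
  ∃ s ss, l = s :: ss ∧ ACeq F ar U (comb1 F ar U u s ss) t

variable {F ar U}

/-- Concatenating lists amounts, up to associativity, to applying `u` to the two combs. -/
theorem comb1_append (u : U) (b : T F ar U) (m l : List (T F ar U)) (a : T F ar U) :
    ACeq F ar U (comb1 F ar U u a (l ++ b :: m))
      (.node u (comb1 F ar U u a l) (comb1 F ar U u b m)) := by
  induction l generalizing a with
  | nil => exact .refl _
  | cons c l ih => exact .trans (.congr_node u (.refl a) (ih c)) (.assoc u _ _ _)

theorem IsCombOf.append {u : U} {l₁ l₂ : List (T F ar U)} {t₁ t₂ : T F ar U}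
    (h₁ : IsCombOf F ar U u l₁ t₁) (h₂ : IsCombOf F ar U u l₂ t₂) :
    IsCombOf F ar U u (l₁ ++ l₂) (.node u t₁ t₂) := by
  obtain ⟨a, l, rfl, h₁⟩ := h₁
  obtain ⟨b, m, rfl, h₂⟩ := h₂
  exact ⟨a, l ++ b :: m, rfl, .trans (comb1_append u b m l a) (.congr_node u h₁ h₂)⟩

/-- `u(a, u(b, z)) =_AC u(b, u(a, z))`. -/
theorem ACeq.left_comm (u : U) (a b z : T F ar U) :
    ACeq F ar U (.node u a (.node u b z)) (.node u b (.node u a z)) :=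
  .trans (.assoc u a b z) (.trans (.congr_node u (.comm u a b) (.refl z)) (.symm (.assoc u b a z)))

theorem IsCombOf.perm {u : U} {l l' : List (T F ar U)} (p : l.Perm l') {t : T F ar U}
    (h : IsCombOf F ar U u l t) : IsCombOf F ar U u l' t := by
  induction p generalizing t with
  | nil => exact h
  | @cons x l₁ l₂ p ih =>
    obtain ⟨_, _, ⟨⟩, h⟩ := h
    cases l₁ with
    | nil => rw [List.nil_perm.mp p]; exact ⟨x, [], rfl, h⟩
    | cons s ss =>
      obtain ⟨s', ss', rfl, h'⟩ := ih ⟨s, ss, rfl, .refl _⟩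
      exact ⟨x, s' :: ss', rfl, .trans (.congr_node u (.refl x) h') h⟩
  | swap x y l =>
    obtain ⟨_, _, ⟨⟩, h⟩ := h
    refine ⟨x, y :: l, rfl, .trans ?_ h⟩
    cases l with
    | nil => exact .comm u x y
    | cons c l => exact ACeq.left_comm u x y _
  | trans _ _ ih₁ ih₂ => exact ih₂ (ih₁ h)

/-- Any enumeration of the `u`-aliens of `t` rebuilds `t` up to AC-equality. -/
theorem isCombOf_aliens (u : U) (t : T F ar U) (l : List (T F ar U))
    (hl : (l : Multiset (T F ar U)) = aliens F ar U u t) : IsCombOf F ar U u l t := by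
  induction t generalizing l with
  | app f ts =>
    rw [aliens, Multiset.coe_eq_singleton] at hl
    exact ⟨_, [], hl, .refl _⟩
  | node v t₁ t₂ ih₁ ih₂ =>
    rw [aliens] at hl
    split_ifs at hl with h
    · subst h
      obtain ⟨l₁, h₁⟩ := Quot.exists_rep (aliens F ar U v t₁)
      obtain ⟨l₂, h₂⟩ := Quot.exists_rep (aliens F ar U v t₂)
      have p : (l₁ ++ l₂).Perm l := by
        rw [← Multiset.coe_eq_coe, hl, ← Multiset.coe_add, ← h₁, ← h₂]
        rfl
      exact ((ih₁ l₁ h₁).append (ih₂ l₂ h₂)).perm p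
    · rw [Multiset.coe_eq_singleton] at hl
      exact ⟨_, [], hl, .refl _⟩

variable (F ar U)

/-- Every ground term is AC-equal to its canonical form. -/
theorem stmt2 [LinearOrder (T F ar U)] (t : T F ar U) :
    ACeq F ar U (canAC F ar U t) t := by
  induction t with
  | app f ts ih => exact .congr_app f _ _ ih
  | node u t₁ t₂ ih₁ ih₂ =>
    refine .trans ?_ (.congr_node u ih₁ ih₂)
    have h := isCombOf_aliens u (.node u (canAC F ar U t₁) (canAC F ar U t₂))
      ((aliens F ar U u (canAC F ar U t₁) + aliens F ar U u (canAC F ar U t₂)).sort (· ≤ ·))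
      (by rw [Multiset.sort_eq, aliens, if_pos rfl])
    obtain ⟨s, ss, hs, h⟩ := h
    rw [canAC, hs]
    exact h
end

section
/- Soundness of AC critical pairs (soundness of the Deduce rule): let u be an AC symbol and a, b, b', l, r, l', r' be ground terms such that l =_AC u(a,b) and l' =_AC u(a,b'). Then u(b,r') =_{AC∪{(l,r),(l',r')}} u(b',r), i.e. the two sides of the critical pair are equal in the smallest congruence on ground terms containing AC-equality and the pairs (l,r) and (l',r'). -/
variable (F : Type) (ar : F → ℕ) (U : Type)

/-- Enlarging the set of equations enlarges the congruence. -/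
theorem EqACE.mono {F : Type} {ar : F → ℕ} {U : Type} {E E' : Set (T F ar U × T F ar U)}
    (hE : E ⊆ E') {s t : T F ar U} (h : EqACE F ar U E s t) : EqACE F ar U E' s t := by
  induction h with
  | ax h => exact .ax (hE h)
  | refl t => exact .refl t
  | symm _ ih => exact .symm ih
  | trans _ _ ih₁ ih₂ => exact .trans ih₁ ih₂
  | congr_app f ts ts' _ ih => exact .congr_app f ts ts' ih
  | congr_node u _ _ ih₁ ih₂ => exact .congr_node u ih₁ ih₂
  | comm u x y => exact .comm u x y
  | assoc u x y z => exact .assoc u x y z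

/-- Soundness of AC critical pairs (soundness of the `Deduce` rule). -/
theorem stmt6 (u : U) (a b b' l r l' r' : T F ar U)
    (h : ACeq F ar U l (.node u a b)) (h' : ACeq F ar U l' (.node u a b')) :
    EqACE F ar U {(l, r), (l', r')} (.node u b r') (.node u b' r) := by
  -- By monotonicity, the AC-equalities for `l` and `l'` also hold modulo the two rules.
  have hr : EqACE F ar U {(l, r), (l', r')} r (.node u a b) :=
    .trans (.symm (.ax (by simp))) (h.mono (Set.empty_subset _))
  have hr' : EqACE F ar U {(l, r), (l', r')} r' (.node u a b') :=
    .trans (.symm (.ax (by simp))) (h'.mono (Set.empty_subset _))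
  -- u(b,r') = u(b,u(a,b')) = u(u(b,a),b') = u(u(a,b),b') = u(r,b') = u(b',r)
  exact .trans (.congr_node u (.refl b) hr') <| .trans (.assoc u b a b') <|
    .trans (.congr_node u (.trans (.comm u b a) (.symm hr)) (.refl b')) (.comm u r b')
end
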